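/- Let J_≥ = {f ∈ C^∞(ℝ) | f(x) = 0 for all x ≥ 0} and J_≤ = {f ∈ C^∞(ℝ) | f(x) = 0 for all x ≤ 0}. The map from the tensor product of C^∞(ℝ)-modules (C^∞(ℝ)/J_≥) ⊗_{C^∞(ℝ)} (C^∞(ℝ)/J_≤) to the space ℝ^ℕ of all real sequences, sending [f] ⊗ [g] to the sequence n ↦ (n-th iterated derivative of f·g at 0), is a well-defined ℝ-linear isomorphism. In particular this tensor product is an infinite-dimensional real vector space. -/

import Mathlib

open scoped Manifold TensorProduct

noncomputable section

/-- The ring `C^∞(ℝ)` of smooth real-valued functions on `ℝ`. -/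
abbrev SmoothR : Type := C^(⊤ : ℕ∞)⟮modelWithCornersSelf ℝ ℝ, ℝ; ℝ⟯

/-- The ideal `J_≥` of smooth functions vanishing at all `x ≥ 0`. -/
def Jge : Ideal SmoothR where
  carrier := {f : SmoothR | ∀ x : ℝ, 0 ≤ x → f x = 0}
  add_mem' := by intro a b ha hb x hx; simp [ha x hx, hb x hx]
  zero_mem' := by intro x hx; simp
  smul_mem' := by intro c f hf x hx; simp [smul_eq_mul, hf x hx]

/-- The ideal `J_≤` of smooth functions vanishing at all `x ≤ 0`. -/
def Jle : Ideal SmoothR where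
  carrier := {f : SmoothR | ∀ x : ℝ, x ≤ 0 → f x = 0}
  add_mem' := by intro a b ha hb x hx; simp [ha x hx, hb x hx]
  zero_mem' := by intro x hx; simp
  smul_mem' := by intro c f hf x hx; simp [smul_eq_mul, hf x hx]


/-- Extension by zero to the left of a flat function is smooth. -/
lemma contDiff_indicator_of_flat (n : ℕ) : ∀ f : ℝ → ℝ, ContDiff ℝ (⊤ : ℕ∞) f →
    (∀ k, iteratedDeriv k f 0 = 0) → ContDiff ℝ n ((Set.Ici (0 : ℝ)).indicator f) := by
  have key : ∀ f : ℝ → ℝ, ContDiff ℝ (⊤ : ℕ∞) f → (∀ k, iteratedDeriv k f 0 = 0) →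
      ∀ x, HasDerivAt ((Set.Ici (0 : ℝ)).indicator f) ((Set.Ici (0 : ℝ)).indicator (deriv f) x) x := by
    intro f hf h x
    have hd : ∀ x, HasDerivAt f (deriv f x) x := fun x =>
      (hf.differentiable (by simp) x).hasDerivAt
    have h0 : f 0 = 0 := by simpa using h 0
    have h1 : deriv f 0 = 0 := by simpa using h 1
    rcases lt_trichotomy x 0 with hx | hx | hx
    · have e : (Set.Ici (0 : ℝ)).indicator f =ᶠ[nhds x] fun _ => 0 := by
        filter_upwards [Iio_mem_nhds hx] with y hy
        exact Set.indicator_of_notMem (by simpa using hy) _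
      rw [Set.indicator_of_notMem (by simpa using hx)]
      exact (hasDerivAt_const x (0 : ℝ)).congr_of_eventuallyEq e
    · subst hx
      rw [Set.indicator_of_mem (by simp), h1]
      have a1 : HasDerivWithinAt ((Set.Ici (0 : ℝ)).indicator f) 0 (Set.Ici 0) 0 := by
        have := (hd 0).hasDerivWithinAt (s := Set.Ici 0)
        rw [h1] at this
        exact this.congr (fun y hy => Set.indicator_of_mem hy _) (Set.indicator_of_mem (by simp) _)
      have a2 : HasDerivWithinAt ((Set.Ici (0 : ℝ)).indicator f) 0 (Set.Iic 0) 0 := by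
        refine (hasDerivWithinAt_const (0 : ℝ) (Set.Iic 0) (0 : ℝ)).congr ?_ ?_
        · intro y hy
          rcases eq_or_lt_of_le (show y ≤ 0 from hy) with h | h
          · subst h; simp [h0]
          · exact Set.indicator_of_notMem (by simpa using h) _
        · simp [h0]
      have := a1.union a2
      rw [Set.union_comm, Set.Iic_union_Ici] at this
      exact hasDerivWithinAt_univ.1 this
    · have e : (Set.Ici (0 : ℝ)).indicator f =ᶠ[nhds x] f := by
        filter_upwards [Ioi_mem_nhds hx] with y hy
        exact Set.indicator_of_mem (le_of_lt (by simpa using hy)) _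
      rw [Set.indicator_of_mem (Set.mem_Ici.2 hx.le)]
      exact (hd x).congr_of_eventuallyEq e
  induction n with
  | zero =>
    intro f hf h
    have : Continuous ((Set.Ici (0 : ℝ)).indicator f) :=
      continuous_iff_continuousAt.2 fun x => (key f hf h x).continuousAt
    simpa using this
  | succ n ih =>
    intro f hf h
    push_cast
    rw [contDiff_succ_iff_deriv]
    refine ⟨fun x => (key f hf h x).differentiableAt, by simp, ?_⟩
    have : deriv ((Set.Ici (0 : ℝ)).indicator f) = (Set.Ici (0 : ℝ)).indicator (deriv f) :=
      funext fun x => (key f hf h x).deriv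
    rw [this]
    refine ih _ ?_ fun k => by rw [← iteratedDeriv_succ']; exact h _
    exact (contDiff_infty_iff_deriv.1 hf).2

/-- Borel's lemma. -/
lemma borel_jets (a : ℕ → ℝ) :
    ∃ f : ℝ → ℝ, ContDiff ℝ (⊤ : ℕ∞) f ∧ ∀ k, iteratedDeriv k f 0 = a k := by
  let b : ContDiffBump (0 : ℝ) := default
  let φ : ℕ → ℝ → ℝ := fun n x => x ^ n * b x
  have hφ : ∀ n, ContDiff ℝ (⊤ : ℕ∞) (φ n) := fun n => (contDiff_id.pow n).mul b.contDiff
  have hφk : ∀ n (k : ℕ), ContDiff ℝ k (φ n) := fun n k => contDiff_infty.1 (hφ n) k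
  have hC : ∀ n k : ℕ, ∃ C : ℝ, ∀ x, ‖iteratedDeriv k (φ n) x‖ ≤ C := by
    intro n k
    have hs : HasCompactSupport (φ n) := b.hasCompactSupport.mul_left
    obtain ⟨C, hC⟩ := (hs.iteratedFDeriv (𝕜 := ℝ) k).exists_bound_of_continuous
      ((hφk n k).continuous_iteratedFDeriv le_rfl)
    exact ⟨C, fun x => by rw [← norm_iteratedFDeriv_eq_norm_iteratedDeriv]; exact hC x⟩
  choose C hC using hC
  have hC0 : ∀ n k, 0 ≤ C n k := fun n k => (norm_nonneg _).trans (hC n k 0)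
  let c : ℕ → ℝ := fun n => a n / n.factorial
  let t : ℕ → ℝ := fun n => 1 + 2 ^ n * |c n| * ∑ k ∈ Finset.range n, C n k
  have ht1 : ∀ n, 1 ≤ t n := fun n => by
    have : 0 ≤ ∑ k ∈ Finset.range n, C n k := Finset.sum_nonneg fun k _ => hC0 n k
    have : 0 ≤ 2 ^ n * |c n| * ∑ k ∈ Finset.range n, C n k := by positivity
    simp only [t]; linarith
  have ht0 : ∀ n, 0 < t n := fun n => lt_of_lt_of_le one_pos (ht1 n)
  have htC : ∀ n k, k < n → 2 ^ n * |c n| * C n k ≤ t n := fun n k hk => by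
    have h1 : C n k ≤ ∑ k ∈ Finset.range n, C n k :=
      Finset.single_le_sum (f := fun k => C n k) (fun k _ => hC0 n k) (Finset.mem_range.2 hk)
    have : 2 ^ n * |c n| * C n k ≤ 2 ^ n * |c n| * ∑ k ∈ Finset.range n, C n k := by gcongr
    simp only [t]; linarith
  let f : ℕ → ℝ → ℝ := fun n x => (c n / t n ^ n) * φ n (t n * x)
  have hf : ∀ n, ContDiff ℝ (⊤ : ℕ∞) (f n) := fun n =>
    contDiff_const.mul ((hφ n).comp (contDiff_const.mul contDiff_id))
  have hder : ∀ n k x, iteratedDeriv k (f n) x =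
      (c n / t n ^ n) * (t n ^ k * iteratedDeriv k (φ n) (t n * x)) := by
    intro n k x
    have h1 : ContDiff ℝ k (fun x => φ n (t n * x)) :=
      (hφk n k).comp (contDiff_const.mul contDiff_id)
    have := iteratedDeriv_const_mul (c n / t n ^ n) (h1.contDiffAt (x := x))
    rw [iteratedDeriv_comp_const_mul (hφk n k)] at this
    exact this
  let v : ℕ → ℕ → ℝ := fun k n =>
    if k < n then (1 / 2) ^ n else |c n / t n ^ n| * (t n ^ k * C n k)
  have hv : ∀ k, Summable (v k) := by
    intro k
    refine (summable_geometric_two).congr_cofinite ?_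
    rw [Nat.cofinite_eq_atTop]
    filter_upwards [Filter.eventually_gt_atTop k] with n hn
    simp [v, hn]
  have hbd : ∀ k n x, ‖iteratedFDeriv ℝ k (f n) x‖ ≤ v k n := by
    intro k n x
    rw [norm_iteratedFDeriv_eq_norm_iteratedDeriv, hder, norm_mul, norm_mul, norm_pow,
      Real.norm_of_nonneg (ht0 n).le, Real.norm_eq_abs]
    have h1 : |c n / t n ^ n| * (t n ^ k * ‖iteratedDeriv k (φ n) (t n * x)‖) ≤
        |c n / t n ^ n| * (t n ^ k * C n k) := by
      have := ht0 n
      gcongr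
      exact hC n k _
    refine h1.trans ?_
    simp only [v]
    split_ifs with hk
    · rw [abs_div, abs_of_pos (pow_pos (ht0 n) n)]
      have h2 : t n ^ k * t n ≤ t n ^ n := by
        rw [← pow_succ]; exact pow_le_pow_right₀ (ht1 n) hk
      have h3 := htC n k hk
      have h4 := ht0 n
      rw [div_mul_eq_mul_div, div_le_iff₀ (by positivity), one_div, inv_pow,
        inv_mul_eq_div, le_div_iff₀ (by positivity)]
      calc |c n| * (t n ^ k * C n k) * 2 ^ n = t n ^ k * (2 ^ n * |c n| * C n k) := by ring
        _ ≤ t n ^ k * t n := by gcongr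
        _ ≤ _ := h2
    · exact le_rfl
  refine ⟨fun x => ∑' n, f n x, contDiff_tsum hf (fun k _ => hv k) (fun k n x _ => hbd k n x), ?_⟩
  have hat : ∀ k n, iteratedDeriv k (f n) 0 = if k = n then a k else 0 := by
    intro k n
    have hb : φ n =ᶠ[nhds 0] fun x => x ^ n := by
      filter_upwards [Metric.closedBall_mem_nhds (0 : ℝ) b.rIn_pos] with x hx
      simp [φ, b.one_of_mem_closedBall hx]
    rw [hder, mul_zero, hb.iteratedDeriv_eq, iteratedDeriv_fun_pow_zero]
    split_ifs with h
    · subst h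
      have h4 := (ht0 k).ne'
      have h5 : (k.factorial : ℝ) ≠ 0 := by positivity
      simp only [c]
      field_simp
    · simp
  intro k
  have hsum : Summable fun n => iteratedFDeriv ℝ k (f n) 0 :=
    Summable.of_norm_bounded (hv k) fun n => hbd k n 0
  rw [iteratedDeriv_eq_iteratedFDeriv,
    iteratedFDeriv_tsum_apply hf (fun k _ => hv k) (fun k n x _ => hbd k n x) le_top,
    ContinuousMultilinearMap.tsum_eval hsum]
  simp_rw [← iteratedDeriv_eq_iteratedFDeriv, hat]
  rw [tsum_eq_single k (fun n hn => by simp [Ne.symm hn])]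
  simp

lemma SmoothR.contDiff (f : SmoothR) : ContDiff ℝ (⊤ : ℕ∞) (f : ℝ → ℝ) :=
  contMDiff_iff_contDiff.1 f.contMDiff

/-- The jet map at `0`. -/
def jetMap : SmoothR →ₗ[ℝ] (ℕ → ℝ) where
  toFun f := fun n => iteratedDeriv n (f : ℝ → ℝ) 0
  map_add' f g := by
    funext n
    exact iteratedDeriv_add (contDiff_infty.1 f.contDiff n).contDiffAt
      (contDiff_infty.1 g.contDiff n).contDiffAt
  map_smul' r f := by
    funext n
    exact iteratedDeriv_const_smul (contDiff_infty.1 f.contDiff n).contDiffAt r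

lemma jet_zero_of_eqOn (f : SmoothR) (U : Set ℝ) (hU : IsOpen U) (h0 : (0 : ℝ) ∈ closure U)
    (h : ∀ x ∈ U, f x = 0) : jetMap f = 0 := by
  funext n
  have hc : Continuous (iteratedDeriv n (f : ℝ → ℝ)) :=
    f.contDiff.continuous_iteratedDeriv n (by exact_mod_cast le_top)
  have h1 : Set.EqOn (iteratedDeriv n (f : ℝ → ℝ)) (fun _ => 0) U := by
    intro x hx
    have e : (f : ℝ → ℝ) =ᶠ[nhds x] fun _ => 0 := by
      filter_upwards [hU.mem_nhds hx] with y hy using h y hy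
    rw [e.iteratedDeriv_eq n]
    simp [iteratedDeriv_const]
  exact h1.closure hc continuous_const h0

lemma jetMap_ker (f : SmoothR) : jetMap f = 0 ↔ f ∈ Jge ⊔ Jle := by
  constructor
  · intro h
    have hs : ContDiff ℝ (⊤ : ℕ∞) ((Set.Ici (0 : ℝ)).indicator (f : ℝ → ℝ)) :=
      contDiff_infty.2 fun n => contDiff_indicator_of_flat n f f.contDiff fun k => congrFun h k
    have h0 : f 0 = 0 := by simpa [jetMap] using congrFun h 0
    let g : SmoothR := ⟨_, contMDiff_iff_contDiff.2 hs⟩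
    have hg : ∀ x, g x = (Set.Ici (0 : ℝ)).indicator (f : ℝ → ℝ) x := fun x => rfl
    have hgle : g ∈ Jle := by
      intro x hx
      rw [hg]
      rcases eq_or_lt_of_le hx with h | h
      · subst h; simp [h0]
      · exact Set.indicator_of_notMem (by simpa using h) _
    have hfg : f - g ∈ Jge := by
      intro x hx
      have : (f - g) x = f x - g x := rfl
      rw [this, hg, Set.indicator_of_mem (by simpa using hx), sub_self]
    have : f = (f - g) + g := by abel
    rw [this]
    exact Submodule.add_mem_sup hfg hgle
  · intro h
    obtain ⟨u, hu, w, hw, rfl⟩ := Submodule.mem_sup.1 h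
    rw [map_add, jet_zero_of_eqOn u (Set.Ioi 0) isOpen_Ioi (by simp) fun x hx => hu x (le_of_lt hx),
      jet_zero_of_eqOn w (Set.Iio 0) isOpen_Iio (by simp) fun x hx => hw x (le_of_lt hx), add_zero]

/-- The map `f ↦ [f] ⊗ [1]`. -/
def toTensor : SmoothR →ₗ[ℝ] ((SmoothR ⧸ Jge) ⊗[SmoothR] (SmoothR ⧸ Jle)) where
  toFun f := Submodule.Quotient.mk f ⊗ₜ[SmoothR] Submodule.Quotient.mk 1
  map_add' f g := by rw [Submodule.Quotient.mk_add, TensorProduct.add_tmul]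
  map_smul' r f := by
    rw [Submodule.Quotient.mk_smul, RingHom.id_apply, TensorProduct.smul_tmul']

lemma mk_tmul_mk (f g : SmoothR) :
    ((Submodule.Quotient.mk f : SmoothR ⧸ Jge) ⊗ₜ[SmoothR] (Submodule.Quotient.mk g : SmoothR ⧸ Jle))
      = toTensor (f * g) := by
  have h1 : (Submodule.Quotient.mk g : SmoothR ⧸ Jle) = g • Submodule.Quotient.mk 1 := by
    rw [← Submodule.Quotient.mk_smul, smul_eq_mul, mul_one]
  have h2 : (Submodule.Quotient.mk (f * g) : SmoothR ⧸ Jge) = g • Submodule.Quotient.mk f := by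
    rw [← Submodule.Quotient.mk_smul, smul_eq_mul, mul_comm]
  change _ = Submodule.Quotient.mk (f * g) ⊗ₜ[SmoothR] Submodule.Quotient.mk 1
  rw [h1, h2, TensorProduct.smul_tmul]

lemma toTensor_surjective : Function.Surjective toTensor := by
  intro z
  induction z with
  | zero => exact ⟨0, map_zero _⟩
  | tmul x y =>
    obtain ⟨f, rfl⟩ := Submodule.Quotient.mk_surjective _ x
    obtain ⟨g, rfl⟩ := Submodule.Quotient.mk_surjective _ y
    exact ⟨f * g, (mk_tmul_mk f g).symm⟩
  | add x y hx hy =>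
    obtain ⟨f, rfl⟩ := hx
    obtain ⟨g, rfl⟩ := hy
    exact ⟨f + g, map_add _ _ _⟩

lemma toTensor_ker (f : SmoothR) : toTensor f = 0 ↔ f ∈ Jge ⊔ Jle := by
  constructor
  · intro h
    let P := Algebra.TensorProduct.productMap
      (Ideal.Quotient.factorₐ SmoothR (le_sup_left : Jge ≤ Jge ⊔ Jle))
      (Ideal.Quotient.factorₐ SmoothR (le_sup_right : Jle ≤ Jge ⊔ Jle))
    have h1 : P ((Ideal.Quotient.mk Jge f) ⊗ₜ[SmoothR] (Ideal.Quotient.mk Jle 1)) = 0 := by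
      have : (Ideal.Quotient.mk Jge f) ⊗ₜ[SmoothR] (Ideal.Quotient.mk Jle 1) = 0 := h
      rw [this, map_zero]
    rw [Algebra.TensorProduct.productMap_apply_tmul, map_one, map_one, mul_one] at h1
    exact Ideal.Quotient.eq_zero_iff_mem.1 h1
  · intro h
    obtain ⟨u, hu, w, hw, rfl⟩ := Submodule.mem_sup.1 h
    have h1 : toTensor u = 0 := by
      change Submodule.Quotient.mk u ⊗ₜ[SmoothR] Submodule.Quotient.mk 1 = 0
      rw [(Submodule.Quotient.mk_eq_zero Jge).2 hu, TensorProduct.zero_tmul]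
    have h2 : toTensor w = 0 := by
      rw [← one_mul w, ← mk_tmul_mk, (Submodule.Quotient.mk_eq_zero Jle).2 hw,
        TensorProduct.tmul_zero]
    rw [map_add, h1, h2, add_zero]

lemma jetMap_surjective : Function.Surjective jetMap := by
  intro a
  obtain ⟨f, hf, h⟩ := borel_jets a
  exact ⟨⟨f, contMDiff_iff_contDiff.2 hf⟩, funext h⟩

/-- The map `(C^∞(ℝ)/J_≥) ⊗_{C^∞(ℝ)} (C^∞(ℝ)/J_≤) → ℝ^ℕ`,
`[f] ⊗ [g] ↦ (n ↦ (f·g)⁽ⁿ⁾(0))`, is a well-defined `ℝ`-linear isomorphism;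
in particular the tensor product is infinite dimensional over `ℝ`. -/
theorem tensorProduct_equiv_sequences :
    ∃ e : ((SmoothR ⧸ Jge) ⊗[SmoothR] (SmoothR ⧸ Jle)) ≃ₗ[ℝ] (ℕ → ℝ),
      ∀ f g : SmoothR,
        e (Submodule.Quotient.mk f ⊗ₜ[SmoothR] Submodule.Quotient.mk g)
          = fun n : ℕ => iteratedDeriv n ((f * g : SmoothR) : ℝ → ℝ) 0 := by
  have hk : LinearMap.ker toTensor = LinearMap.ker jetMap := by
    ext f
    rw [LinearMap.mem_ker, LinearMap.mem_ker, toTensor_ker, jetMap_ker]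
  refine ⟨(toTensor.quotKerEquivOfSurjective toTensor_surjective).symm.trans
    ((Submodule.quotEquivOfEq _ _ hk).trans
      (jetMap.quotKerEquivOfSurjective jetMap_surjective)), fun f g => ?_⟩
  rw [mk_tmul_mk]
  have : (toTensor.quotKerEquivOfSurjective toTensor_surjective).symm (toTensor (f * g)) =
      Submodule.Quotient.mk (f * g) := by
    rw [LinearEquiv.symm_apply_eq]; rfl
  rw [LinearEquiv.trans_apply, this]
  rfl
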